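/- arXiv:2404.09175 — 2 statements merged into one kernel-verified Lean document; each statement's English description precedes it below -/
import Mathlib

section
/- Suppose π ∈ A, Γ ⊆ A, and [K : 𝔽_q(π)] = [K_v : 𝔽_q((π))]. Let α₁, …, α_{ef} ∈ A be elements whose reductions modulo πA are linearly independent over 𝔽_q (here e = v(π), f is the residue degree, and dim_{𝔽_q} A/πA = ef). If Γ ⊆ 𝔽_q[π]·α₁ + ⋯ + 𝔽_q[π]·α_{ef} (every γ ∈ Γ is an 𝔽_q[π]-linear combination of α₁, …, α_{ef}, where 𝔽_q[π] is the ring of polynomials in π over 𝔽_q), then (Γ, π) has property A. -/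
/-!
Common setup: `Kv` is a complete field equipped with a (normalized, `ℤ`-valued)
valuation `Valued.v : Kv → ℤₘ₀ = WithZero (Multiplicative ℤ)`, and `K` is a dense
subfield of `Kv` (so that `Kv` is the completion `K_v` of `K`).  The valuation is
written multiplicatively: the additive valuation of `x` is `n` iff
`Valued.v x = ofAdd (-n)`; the valuation ring `A_v` is `{x | Valued.v x ≤ 1}` and
`π A_v = {x | Valued.v x ≤ Valued.v π}`.
-/

open scoped Multiplicative

/-- The multiplicative value monoid `ℤₘ₀` for normalized `ℤ`-valued valuations. -/
abbrev ZM0 : Type := WithZero (Multiplicative ℤ)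

/-- A sequence `b : ℕ → α` is `k`-automatic if its `k`-kernel
`{ (b (n k^i + j))_n : i ≥ 0, 0 ≤ j < k^i }` is finite. -/
def IsKAutomatic {α : Type*} (k : ℕ) (b : ℕ → α) : Prop :=
  {c : ℕ → α | ∃ i j : ℕ, j < k ^ i ∧ c = fun n => b (n * k ^ i + j)}.Finite

/-- The sequence `{a n}_{n ≥ m}` is ultimately periodic: there are `N ≥ m` and
`L > 0` with `a (n + L) = a n` for all `n ≥ N`. -/
def UltimatelyPeriodic {α : Type*} (m : ℤ) (a : ℤ → α) : Prop :=
  ∃ N L : ℤ, m ≤ N ∧ 0 < L ∧ ∀ n : ℤ, N ≤ n → a (n + L) = a n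

variable {Kv : Type*} [Field Kv] [Valued Kv ZM0]

/-- `x = ∑_{n ≥ m} a_n π^n` is the expansion of `x` with respect to `(Γ, π)`:
all digits `a n` for `n ≥ m` lie in `Γ` and the series converges to `x`. -/
def IsExpansion (π : Kv) (Γ : Set Kv) (m : ℤ) (a : ℤ → Kv) (x : Kv) : Prop :=
  (∀ n : ℤ, m ≤ n → a n ∈ Γ) ∧
    HasSum (fun n : ℕ => a (m + n) * π ^ (m + (n : ℤ))) x

/-- `Γ ⊆ A_v` is a complete set of representatives of `A_v / π A_v`: reduction
modulo `π A_v` maps `Γ` bijectively onto `A_v / π A_v`. -/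
def IsCompleteSetOfReps (π : Kv) (Γ : Set Kv) : Prop :=
  (∀ γ ∈ Γ, Valued.v γ ≤ 1) ∧
    ∀ x : Kv, Valued.v x ≤ 1 → ∃! γ, γ ∈ Γ ∧ Valued.v (x - γ) ≤ Valued.v π

/-- `(Γ, π)` has property A: for every `x ∈ K_v`, `x` is rational (i.e. `x ∈ K`)
iff the digit sequence of the expansion of `x` w.r.t. `(Γ, π)` is ultimately
periodic. -/
def HasPropertyA (K : Subfield Kv) (π : Kv) (Γ : Set Kv) : Prop :=
  ∀ (x : Kv) (m : ℤ) (a : ℤ → Kv), IsExpansion π Γ m a x →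
    (x ∈ K ↔ UltimatelyPeriodic m a)

/-- `(Γ, π)` has property B: for every `x ∈ K_v`, `x` is algebraic over `K` iff
the digit sequence of the expansion of `x` w.r.t. `(Γ, π)` is `p`-automatic. -/
def HasPropertyB (p : ℕ) (K : Subfield Kv) (π : Kv) (Γ : Set Kv) : Prop :=
  ∀ (x : Kv) (m : ℤ) (a : ℤ → Kv), IsExpansion π Γ m a x →
    (IsAlgebraic ↥K x ↔ IsKAutomatic p fun n : ℕ => a (m + n))

/-- The degree `[S : F]` of a subset `S ⊆ Kv` over a subfield `F ⊆ Kv` (intended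
for `F ⊆ S` with `S` a field): the rank of the `F`-span of `S` in `Kv`. -/
noncomputable def degOver (F : Subfield Kv) (S : Set Kv) : Cardinal :=
  Module.rank ↥F ↥(Submodule.span ↥F S)

/-- `Kv` is the completion of a global function field `K` of characteristic `p`
with respect to a normalized nontrivial valuation:  `Kv` has characteristic `p`
and is complete, `K` is dense in `Kv`, the valuation takes every value `ofAdd n`
(`n ∈ ℤ`) on `K` (normalization/nontriviality), and `K` contains an element `x₀`
transcendental over the prime field `𝔽_p = ⊥` with `[K : 𝔽_p(x₀)] < ∞`. -/
structure IsGlobalFunctionFieldCompletion (p : ℕ) (K : Subfield Kv) : Prop where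
  charP : CharP Kv p
  complete : CompleteSpace Kv
  dense : Dense (K : Set Kv)
  normalized : ∀ n : ℤ, ∃ x ∈ K,
    Valued.v x = ((Multiplicative.ofAdd n : Multiplicative ℤ) : ZM0)
  globalFunctionField : ∃ x₀ ∈ K, Transcendental (⊥ : Subfield Kv) x₀ ∧
    degOver (Subfield.closure {x₀}) (K : Set Kv) < Cardinal.aleph0

/-- The constant field `𝔽_q` of `K`: the algebraic closure of `𝔽_p` in `K`,
i.e. the elements of `K` fixed by some positive power of the Frobenius. -/
def ConstantField (p : ℕ) (K : Subfield Kv) : Set Kv :=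
  {x : Kv | x ∈ K ∧ ∃ n : ℕ, 0 < n ∧ x ^ p ^ n = x}

/-- The subfield `𝔽_q(π)` of `Kv` generated by `π` over the constant field. -/
def FqPi (p : ℕ) (K : Subfield Kv) (π : Kv) : Subfield Kv :=
  Subfield.closure (ConstantField p K ∪ {π})

/-- `𝔽_q((π))`: the completion of `𝔽_q(π)`, i.e. its closure in `Kv`. -/
noncomputable def FqPiCompletion (p : ℕ) (K : Subfield Kv) (π : Kv) : Subfield Kv :=
  (FqPi p K π).topologicalClosure

/-- The set `𝔽_q[π]` of polynomials in `π` with coefficients in the constant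
field `𝔽_q` of `K`. -/
def PolyInPi (p : ℕ) {Kv : Type*} [Field Kv] (K : Subfield Kv) (π : Kv) : Set Kv :=
  {y : Kv | ∃ (N : ℕ) (c : ℕ → Kv), (∀ k, c k ∈ ConstantField p K) ∧
    y = ∑ k ∈ Finset.range N, c k * π ^ k}

/-!
Periodic expansions are rational by the geometric series. For the converse, write `F` for the
finite field of constants. Independence modulo `π` allows a factor `π` to be cancelled from a
combination of the `α i` with coefficients in `F[π]` without raising the degrees of the
coefficients; in particular the `α i` are independent over `F(π)`. They also generate the
completion over `F((π))`, so the degree hypothesis forces them to generate `K` over `F(π)`. Hence,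
for `x ∈ K`, a single nonzero `q ∈ F[π]` turns `x` and all digits into combinations with
coefficients in `F[π]` of bounded degree. The tails of the expansion satisfy `xₖ = γₖ + π xₖ₊₁`
with `γₖ` a digit, so cancelling `π` keeps every `q xₖ` within the same degree bound. As `F` is
finite, only finitely many tails occur, and two equal tails force periodicity.
-/

open Polynomial Filter Topology
open scoped IntermediateField IntermediateField.algebraAdjoinAdjoin

section Transcendental

theorem linearIndependent_pow_of_transcendental {k L : Type*} [CommRing k] [CommRing L]
    [Algebra k L] {t : L} (ht : Transcendental k t) : LinearIndependent k fun n : ℕ => t ^ n := by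
  have h := (basisMonomials k).linearIndependent.map' (aeval t).toLinearMap
    (LinearMap.ker_eq_bot.2 (transcendental_iff_injective.1 ht))
  simpa [Function.comp_def, aeval_monomial] using h

variable {k L : Type*} [Field k] [Field L] [Algebra k L] {t : L}

theorem linearDisjoint_algebraicClosure_adjoin_singleton (ht : Transcendental k t) :
    (Subalgebra.algebraicClosure k L).LinearDisjoint (Algebra.adjoin k {t}) := by
  let b := (basisMonomials k).map (algEquivOfTranscendental k t ht).toLinearEquiv
  have hb : (Algebra.adjoin k {t}).val ∘ b = fun n => t ^ n := by
    ext n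
    simp [b]
  refine .of_basis_right _ _ b ?_
  rw [hb]
  exact linearIndependent_pow_of_transcendental (ht.extendScalars (Subalgebra.algebraicClosure k L))

theorem linearIndependent_adjoin_simple_of_isAlgebraic (ht : Transcendental k t) {ι : Type*}
    {w : ι → L} (hw : ∀ i, IsAlgebraic k (w i)) (hli : LinearIndependent k w) :
    LinearIndependent k⟮t⟯ w := by
  have hwC : LinearIndependent k fun i => (⟨w i, hw i⟩ : Subalgebra.algebraicClosure k L) :=
    .of_comp (Subalgebra.algebraicClosure k L).val.toLinearMap hli
  have hwt : LinearIndependent (Algebra.adjoin k {t}) w :=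
    (linearDisjoint_algebraicClosure_adjoin_singleton ht).linearIndependent_left_of_flat hwC
  exact (LinearIndependent.iff_fractionRing (Algebra.adjoin k {t}) k⟮t⟯).1 hwt

theorem finite_of_isAlgebraic_of_subset (ht : Transcendental k t) (E : IntermediateField k L)
    [Algebra.IsAlgebraic k E] (W : Submodule k⟮t⟯ L) [Module.Finite k⟮t⟯ W]
    (hEW : (E : Set L) ⊆ W) : Module.Finite k E := by
  let b := Module.Free.chooseBasis k E
  have hli : LinearIndependent k⟮t⟯ fun i => (b i : L) :=
    linearIndependent_adjoin_simple_of_isAlgebraic ht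
      (fun i => (Algebra.IsAlgebraic.isAlgebraic (b i)).algebraMap)
      (b.linearIndependent.map' E.val.toLinearMap (LinearMap.ker_eq_bot.2 E.val.injective))
  have hliW : LinearIndependent k⟮t⟯ fun i => (⟨b i, hEW (b i).2⟩ : W) :=
    .of_comp W.subtype hli
  have := hliW.finite
  exact .of_basis b

end Transcendental

theorem adjoin_toSubfield {L : Type*} [Field L] (F : Subfield L) (S : Set L) :
    (IntermediateField.adjoin F S).toSubfield = Subfield.closure (F ∪ S) := by
  change Subfield.closure (Set.range (algebraMap F L) ∪ S) = _
  congr 2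
  exact Subtype.range_coe

section ConstantField

theorem pow_pow_mul_eq_self {M : Type*} [Monoid M] {x : M} {p n : ℕ} (h : x ^ p ^ n = x) (m : ℕ) :
    x ^ p ^ (n * m) = x := by
  simpa only [pow_iterate, ← pow_mul, Function.IsFixedPt] using
    (show Function.IsFixedPt (· ^ p ^ n) x from h).iterate m

theorem finite_bot_subfield (p : ℕ) [Fact p.Prime] (L : Type*) [Field L] [CharP L p] :
    Finite (⊥ : Subfield L) := by
  let _ := ZMod.algebra L p
  rw [← ZMod.fieldRange_castHom_eq_bot p (K := L)]
  exact Set.finite_range _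

variable (p : ℕ) [Fact p.Prime] {L : Type*} [Field L] [CharP L p]

/-- The constant field of `K` as a subfield of the ambient field, so that it can serve as a field of
scalars. -/
def constantSubfield (K : Subfield L) : Subfield L where
  carrier := ConstantField p K
  mul_mem' := by
    rintro a b ⟨ha, n, hn, han⟩ ⟨hb, m, hm, hbm⟩
    refine ⟨mul_mem ha hb, n * m, Nat.mul_pos hn hm, ?_⟩
    rw [mul_pow, pow_pow_mul_eq_self han, mul_comm n m, pow_pow_mul_eq_self hbm]
  one_mem' := ⟨one_mem _, 1, one_pos, one_pow _⟩
  add_mem' := by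
    rintro a b ⟨ha, n, hn, han⟩ ⟨hb, m, hm, hbm⟩
    refine ⟨add_mem ha hb, n * m, Nat.mul_pos hn hm, ?_⟩
    rw [add_pow_char_pow, pow_pow_mul_eq_self han, mul_comm n m, pow_pow_mul_eq_self hbm]
  zero_mem' := ⟨zero_mem _, 1, one_pos, zero_pow (pow_ne_zero _ (Fact.out : p.Prime).ne_zero)⟩
  neg_mem' := by
    rintro a ⟨ha, n, hn, han⟩
    exact ⟨neg_mem ha, n, hn, by rw [neg_pow, han, neg_one_pow_char_pow, neg_one_mul]⟩
  inv_mem' := by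
    rintro a ⟨ha, n, hn, han⟩
    exact ⟨inv_mem ha, n, hn, by rw [inv_pow, han]⟩

theorem isAlgebraic_bot_of_mem_constantSubfield {K : Subfield L}
    {x : L} (hx : x ∈ constantSubfield p K) : IsAlgebraic (⊥ : Subfield L) x := by
  obtain ⟨-, n, hn, hxn⟩ := hx
  refine ⟨X ^ p ^ n - X, FiniteField.X_pow_card_sub_X_ne_zero _ ?_, by simp [hxn]⟩
  exact Nat.one_lt_pow hn.ne' (Fact.out : p.Prime).one_lt

theorem finite_constantSubfield {K : Subfield L} {t : L}
    (ht : Transcendental (⊥ : Subfield L) t)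
    (hK : degOver (Subfield.closure {t}) (K : Set L) < Cardinal.aleph0) :
    Finite (constantSubfield p K) := by
  let k : Subfield L := ⊥
  have hkt : k⟮t⟯.toSubfield = Subfield.closure {t} := by
    rw [adjoin_toSubfield, Subfield.closure_union, Subfield.closure_eq, bot_sup_eq]
  rw [← hkt] at hK
  let E : IntermediateField k L :=
    (constantSubfield p K).toIntermediateField fun x => (bot_le : k ≤ constantSubfield p K) x.2
  have : Algebra.IsAlgebraic k E :=
    ⟨fun x => isAlgebraic_algebraMap_iff (algebraMap E L).injective |>.1
      (isAlgebraic_bot_of_mem_constantSubfield p x.2)⟩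
  have : Module.Finite k⟮t⟯ (Submodule.span k⟮t⟯ (K : Set L)) := Module.rank_lt_aleph0_iff.1 hK
  have : Module.Finite k E :=
    finite_of_isAlgebraic_of_subset ht E _ fun x hx => Submodule.subset_span hx.1
  have := finite_bot_subfield p L
  exact Module.finite_of_finite k (M := E)

theorem polyInPi_subset_adjoin (K : Subfield L) (π : L) :
    PolyInPi p K π ⊆ Algebra.adjoin (constantSubfield p K) {π} := by
  rintro y ⟨N, c, hc, rfl⟩
  refine sum_mem fun n _ => mul_mem ?_ (pow_mem (Algebra.self_mem_adjoin_singleton _ π) n)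
  exact (Algebra.adjoin (constantSubfield p K) {π}).algebraMap_mem ⟨c n, hc n⟩

end ConstantField

theorem divX_mem_degreeLT {R : Type*} [Semiring R] {n : ℕ} {g : R[X]} (hg : g ∈ degreeLT R n) :
    g.divX ∈ degreeLT R n := by
  rw [mem_degreeLT, degree_lt_iff_coeff_zero] at hg ⊢
  intro k hk
  rw [coeff_divX]
  exact hg (k + 1) (hk.trans k.le_succ)

section PolynomialCombinations

variable {L Γ₀ ι : Type*} [Field L] [LinearOrderedCommGroupWithZero Γ₀] (v : Valuation L Γ₀)
  (F : Type*) [Field F] [Algebra F L] [Fintype ι] (π : L) (α : ι → L)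

/-- The reductions of the `α i` modulo `π` are linearly independent over `F`; membership in
`π A_v` is expressed as `v x ≤ v π`. -/
def IndependentModulo : Prop :=
  ∀ c : ι → F, v (∑ i, c i • α i) ≤ v π → c = 0

/-- The reductions of the `α i` modulo `π` generate over `F` the reductions of all integral
elements of `S`. -/
def SpansModulo (S : Set L) : Prop :=
  ∀ x ∈ S, v x ≤ 1 → ∃ c : ι → F, v (x - ∑ i, c i • α i) ≤ v π

/-- Distinct elements of `Γ` have distinct reductions modulo `π`; this makes the digits of an
expansion with digits in `Γ` unique. -/
def IncongruentModulo (Γ : Set L) : Prop :=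
  ∀ γ ∈ Γ, ∀ δ ∈ Γ, v (γ - δ) ≤ v π → γ = δ

/-- The combination `∑ i, g i(π) α i` of the `α i` with coefficients in `F[π]`. -/
noncomputable def polyComb : (ι → F[X]) →ₗ[F] L :=
  ∑ i, LinearMap.mulRight F (α i) ∘ₗ (aeval π).toLinearMap ∘ₗ LinearMap.proj i

/-- The combinations of the `α i` with coefficients polynomials in `π` of degree less than `n`. It
bounds the tails of an expansion of a rational element, up to a common denominator. -/
noncomputable def polyLattice (n : ℕ) : Submodule F L :=
  (Submodule.pi Set.univ fun _ : ι => degreeLT F n).map (polyComb F π α)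

variable {v F π α}

theorem polyComb_apply (g : ι → F[X]) : polyComb F π α g = ∑ i, aeval π (g i) * α i := by
  simp [polyComb]

theorem polyComb_eq_coeff_zero_add (g : ι → F[X]) :
    polyComb F π α g =
      ∑ i, (g i).coeff 0 • α i + π * polyComb F π α fun i => (g i).divX := by
  simp only [polyComb_apply, Finset.mul_sum, ← Finset.sum_add_distrib]
  refine Finset.sum_congr rfl fun i _ => ?_
  conv_lhs => rw [← divX_mul_X_add (g i)]
  simp only [map_add, map_mul, aeval_X, aeval_C, Algebra.smul_def]
  ring

theorem mem_span_adjoin_iff_exists_polyComb {y : L} :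
    y ∈ Submodule.span (Algebra.adjoin F {π}) (Set.range α) ↔ ∃ g, polyComb F π α g = y := by
  simp only [Submodule.mem_span_range_iff_exists_fun, polyComb_apply]
  constructor
  · rintro ⟨c, rfl⟩
    choose g hg using fun i => Algebra.adjoin_mem_exists_aeval F π (c i).2
    exact ⟨g, by simp only [hg]; rfl⟩
  · rintro ⟨g, rfl⟩
    exact ⟨fun i => ⟨aeval π (g i), aeval_mem_adjoin_singleton F π⟩, rfl⟩

theorem finite_polyLattice [Finite F] (n : ℕ) : (polyLattice F π α n : Set L).Finite := by
  have hdeg : (degreeLT F n : Set F[X]).Finite := by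
    have := Finite.of_equiv _ (degreeLTEquiv F n).toEquiv.symm
    exact Set.toFinite _
  exact (Set.Finite.pi fun _ : ι => hdeg).image _

theorem eventually_mem_polyLattice {y : L}
    (hy : y ∈ Submodule.span (Algebra.adjoin F {π}) (Set.range α)) :
    ∀ᶠ n in atTop, y ∈ polyLattice F π α n := by
  obtain ⟨g, rfl⟩ := mem_span_adjoin_iff_exists_polyComb.1 hy
  have hdeg : ∀ᶠ n in atTop, ∀ i, g i ∈ degreeLT F n := eventually_all.2 fun i => by
    filter_upwards [eventually_gt_atTop (g i).natDegree] with n hn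
    exact mem_degreeLT.2 (degree_le_natDegree.trans_lt (mod_cast hn))
  filter_upwards [hdeg] with n hn
  exact Submodule.mem_map_of_mem fun i _ => hn i

theorem IncongruentModulo.finite [Finite F] {Γ : Set L} (hΓ : IncongruentModulo v π Γ)
    (hΓ1 : ∀ γ ∈ Γ, v γ ≤ 1) (hspan : SpansModulo v F π α Γ) : Γ.Finite := by
  choose! c hc using hspan
  refine Set.Finite.of_finite_image (Set.toFinite (Set.image c Γ)) fun γ hγ δ hδ hγδ => ?_
  refine hΓ γ hγ δ hδ ?_
  have hγ' := hc γ hγ (hΓ1 γ hγ)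
  rw [hγδ] at hγ'
  rw [← sub_sub_sub_cancel_right γ δ (∑ i, c δ i • α i)]
  exact (v.map_sub _ _).trans (max_le hγ' (hc δ hδ (hΓ1 δ hδ)))

variable [v.IsTrivialOn F]

theorem valuation_smul_le_one (c : F) {x : L} (hx : v x ≤ 1) : v (c • x) ≤ 1 := by
  rw [Algebra.smul_def, map_mul]
  exact mul_le_one' (Valuation.IsTrivialOn.valuation_algebraMap_le_one v c) hx

theorem valuation_aeval_le_one (hπ : v π ≤ 1) (g : F[X]) : v (aeval π g) ≤ 1 := by
  rw [aeval_eq_sum_range]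
  refine v.map_sum_le fun n _ => valuation_smul_le_one _ ?_
  rw [map_pow]
  exact pow_le_one' hπ n

theorem valuation_polyComb_le_one (hπ : v π ≤ 1) (hα : ∀ i, v (α i) ≤ 1) (g : ι → F[X]) :
    v (polyComb F π α g) ≤ 1 := by
  rw [polyComb_apply]
  refine v.map_sum_le fun i _ => ?_
  rw [map_mul]
  exact mul_le_one' (valuation_aeval_le_one hπ (g i)) (hα i)

namespace IndependentModulo

variable (hind : IndependentModulo v F π α) (hπ : v π ≤ 1) (hα : ∀ i, v (α i) ≤ 1)
include hind hπ hα

theorem coeff_zero_eq_zero {g : ι → F[X]} (hg : v (polyComb F π α g) ≤ v π) (i : ι) :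
    (g i).coeff 0 = 0 := by
  refine congrFun (hind (fun i => (g i).coeff 0) ?_) i
  rw [← sub_eq_of_eq_add (polyComb_eq_coeff_zero_add (π := π) (α := α) g)]
  refine (v.map_sub _ _).trans (max_le hg ?_)
  rw [map_mul]
  exact mul_le_of_le_one_right' (valuation_polyComb_le_one hπ hα _)

theorem polyComb_eq_mul_polyComb_divX {g : ι → F[X]} (hg : v (polyComb F π α g) ≤ v π) :
    polyComb F π α g = π * polyComb F π α fun i => (g i).divX := by
  rw [polyComb_eq_coeff_zero_add]
  simp only [hind.coeff_zero_eq_zero hπ hα hg, zero_smul, Finset.sum_const_zero, zero_add]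

theorem exists_mem_polyLattice_eq_mul {n : ℕ} {y : L} (hy : y ∈ polyLattice F π α n)
    (hvy : v y ≤ v π) : ∃ z ∈ polyLattice F π α n, y = π * z := by
  obtain ⟨g, hg, rfl⟩ := hy
  exact ⟨_, Submodule.mem_map_of_mem fun i _ => divX_mem_degreeLT (hg i trivial),
    hind.polyComb_eq_mul_polyComb_divX hπ hα hvy⟩

theorem injective_polyComb (hπ0 : π ≠ 0) : Function.Injective (polyComb F π α) := by
  have hcoeff (n : ℕ) : ∀ g : ι → F[X], polyComb F π α g = 0 → ∀ i, (g i).coeff n = 0 := by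
    induction n with
    | zero => exact fun g hg => hind.coeff_zero_eq_zero hπ hα (by simp [hg])
    | succ n ih =>
      intro g hg i
      have hdiv := hind.polyComb_eq_mul_polyComb_divX hπ hα (g := g) (by simp [hg])
      rw [hg, eq_comm, mul_eq_zero] at hdiv
      simpa only [coeff_divX] using ih _ (hdiv.resolve_left hπ0) i
  refine (injective_iff_map_eq_zero _).2 fun g hg => ?_
  ext i n
  simpa using hcoeff n g hg i

theorem linearIndependent_adjoin (hπ0 : π ≠ 0) : LinearIndependent F⟮π⟯ α := by
  refine (LinearIndependent.iff_fractionRing (Algebra.adjoin F {π}) F⟮π⟯).1 ?_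
  refine Fintype.linearIndependent_iff.2 fun c hc i => ?_
  choose g hg using fun i => Algebra.adjoin_mem_exists_aeval F π (c i).2
  have hg0 : polyComb F π α g = 0 := by rw [← hc, polyComb_apply]; simp only [hg]; rfl
  have hgi : g i = 0 := congrFun (hind.injective_polyComb hπ hα hπ0 (hg0.trans (map_zero _).symm)) i
  exact Subtype.ext (by rw [← hg, hgi, map_zero, ZeroMemClass.coe_zero])

end IndependentModulo

end PolynomialCombinations

section PowerSeries

variable {L Γ₀ : Type*} [Field L] [LinearOrderedCommGroupWithZero Γ₀] [Valued L Γ₀]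

theorem nonarchimedeanAddGroup_of_valued : NonarchimedeanAddGroup L where
  is_nonarchimedean U hU := by
    obtain ⟨γ, hγ⟩ := Valued.mem_nhds_zero.1 hU
    exact ⟨⟨(Valued.v (R := L)).restrict.ltAddSubgroup γ, Valued.isOpen_ball L γ.1⟩, hγ⟩

theorem exists_mem_valuation_sub_le {S : Set L} (hS : Dense S) {π : L} (hπ0 : π ≠ 0) (x : L) :
    ∃ y ∈ S, Valued.v (x - y) ≤ Valued.v π := by
  have hcont : Continuous fun y => (x - y) / π := by fun_prop
  have hopen := (Valued.isOpen_integer L).preimage hcont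
  obtain ⟨y, hy, hyS⟩ := hS.inter_open_nonempty _ hopen ⟨x, by simp⟩
  refine ⟨y, hyS, ?_⟩
  have hdiv : Valued.v (x - y) / Valued.v π ≤ 1 := by rw [← map_div₀]; exact hy
  exact (div_le_one₀ (by simpa [zero_lt_iff] using hπ0)).1 hdiv

/-- The value of the power series `∑ bₙ πⁿ` in a valued field (zero if the series diverges). -/
noncomputable def powerSum (π : L) (b : ℕ → L) : L := ∑' n, b n * π ^ n

variable {π : L}

theorem powerSum_mem {E : Subfield L} (hE : IsClosed (E : Set L)) (hπE : π ∈ E) {b : ℕ → L}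
    (hb : ∀ n, b n ∈ E) : powerSum π b ∈ E :=
  tsum_mem hE fun n => mul_mem (hb n) (pow_mem hπE n)

theorem valuation_powerSum_le_one (hπ : Valued.v π ≤ 1) {b : ℕ → L}
    (hb : ∀ n, Valued.v (b n) ≤ 1) : Valued.v (powerSum π b) ≤ 1 := by
  refine tsum_mem (s := Valued.v.integer) (Valued.isClosed_integer L) fun n => ?_
  rw [Valuation.mem_integer_iff, map_mul, map_pow]
  exact mul_le_one' (hb n) (pow_le_one' hπ n)

variable [MulArchimedean Γ₀]

theorem exists_valuation_pow_mul_le_one (hπ : Valued.v π < 1) (x : L) :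
    ∃ N : ℕ, Valued.v (π ^ N * x) ≤ 1 := by
  obtain rfl | hx := eq_or_ne x 0
  · exact ⟨0, by simp⟩
  have hvx : Valued.v x ≠ 0 := by simpa using hx
  obtain ⟨N, hN⟩ := exists_pow_lt₀ hπ (Units.mk0 _ (inv_ne_zero hvx))
  refine ⟨N, ?_⟩
  calc Valued.v (π ^ N * x) = Valued.v π ^ N * Valued.v x := by rw [map_mul, map_pow]
    _ ≤ (Valued.v x)⁻¹ * Valued.v x := by gcongr; exact hN.le
    _ = 1 := inv_mul_cancel₀ hvx

theorem tendsto_mul_pow_zero (hπ : Valued.v π < 1) {b : ℕ → L} (hb : ∀ n, Valued.v (b n) ≤ 1) :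
    Tendsto (fun n => b n * π ^ n) atTop (𝓝 0) := by
  rw [(Valued.hasBasis_nhds_zero L Γ₀).tendsto_right_iff]
  intro γ _
  filter_upwards [(Valued.hasBasis_nhds_zero L Γ₀).tendsto_right_iff.1
    (Valued.tendsto_zero_pow_of_v_lt_one hπ) γ trivial] with n hn
  refine lt_of_le_of_lt ?_ hn
  rw [map_mul]
  exact mul_le_of_le_one_left' (Valued.v.restrict_le_one_iff.2 (hb n))

variable [CompleteSpace L] (hπ : Valued.v π < 1)
include hπ

theorem summable_mul_pow {b : ℕ → L} (hb : ∀ n, Valued.v (b n) ≤ 1) :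
    Summable fun n => b n * π ^ n := by
  have := nonarchimedeanAddGroup_of_valued (L := L)
  refine NonarchimedeanAddGroup.summable_of_tendsto_cofinite_zero ?_
  rw [Nat.cofinite_eq_atTop]
  exact tendsto_mul_pow_zero hπ hb

theorem powerSum_eq_sum_add {b : ℕ → L} (hb : ∀ n, Valued.v (b n) ≤ 1) (N : ℕ) :
    powerSum π b =
      ∑ n ∈ Finset.range N, b n * π ^ n + π ^ N * powerSum π fun n => b (n + N) := by
  rw [powerSum, ← (summable_mul_pow hπ hb).sum_add_tsum_nat_add N, powerSum, ← tsum_mul_left]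
  congr 2 with n
  ring

theorem powerSum_add_eq {b : ℕ → L} (hb : ∀ n, Valued.v (b n) ≤ 1) (k : ℕ) :
    (powerSum π fun n => b (n + k)) = b k + π * powerSum π fun n => b (n + (k + 1)) := by
  simpa [add_assoc, add_comm 1 k] using powerSum_eq_sum_add hπ (fun n => hb (n + k)) 1

theorem powerSum_sum_mul {ι : Type*} [Fintype ι] {b : ℕ → ι → L}
    (hb : ∀ n i, Valued.v (b n i) ≤ 1) (α : ι → L) :
    (powerSum π fun n => ∑ i, b n i * α i) = ∑ i, (powerSum π fun n => b n i) * α i := by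
  simp only [powerSum, ← tsum_mul_right]
  rw [← Summable.tsum_finsetSum fun i _ => (summable_mul_pow hπ fun n => hb n i).mul_right _]
  refine tsum_congr fun n => ?_
  rw [Finset.sum_mul]
  exact Finset.sum_congr rfl fun i _ => mul_right_comm _ _ _

theorem exists_powerSum_eq (hπ0 : π ≠ 0) {D : Set L} (hD1 : ∀ d ∈ D, Valued.v d ≤ 1)
    (hD : ∀ y, Valued.v y ≤ 1 → ∃ d ∈ D, Valued.v (y - d) ≤ Valued.v π)
    {x : L} (hx : Valued.v x ≤ 1) : ∃ d : ℕ → L, (∀ n, d n ∈ D) ∧ powerSum π d = x := by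
  choose! digit hdigit hsub using hD
  let rest (y : L) : L := (y - digit y) / π
  let r (n : ℕ) : L := rest^[n] x
  have hr (n : ℕ) : Valued.v (r n) ≤ 1 := by
    induction n with
    | zero => exact hx
    | succ n ih =>
      simp only [r, Function.iterate_succ_apply', rest, map_div₀]
      exact div_le_one_of_le₀ (hsub _ ih) zero_le
  have hpartial (N : ℕ) : x - ∑ n ∈ Finset.range N, digit (r n) * π ^ n = r N * π ^ N := by
    induction N with
    | zero => simp [r]
    | succ N ih =>
      simp only [Finset.sum_range_succ, ← sub_sub, ih, r, Function.iterate_succ_apply', rest]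
      field_simp
      ring
  have hsum := (summable_mul_pow hπ fun n => hD1 _ (hdigit _ (hr n))).hasSum.tendsto_sum_nat
  have hlim := tendsto_const_nhds (x := x) |>.sub (tendsto_mul_pow_zero hπ hr)
  simp only [← hpartial, sub_sub_cancel, sub_zero] at hlim
  exact ⟨fun n => digit (r n), fun n => hdigit _ (hr n), tendsto_nhds_unique hsum hlim⟩

theorem powerSum_injOn (hπ0 : π ≠ 0) {Γ : Set L} (hΓ1 : ∀ γ ∈ Γ, Valued.v γ ≤ 1)
    (hΓ : IncongruentModulo Valued.v π Γ) :
    Set.InjOn (powerSum π) {b | ∀ n, b n ∈ Γ} := by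
  intro b hb c hc hbc
  have hb1 (n : ℕ) : Valued.v (b n) ≤ 1 := hΓ1 _ (hb n)
  have hc1 (n : ℕ) : Valued.v (c n) ≤ 1 := hΓ1 _ (hc n)
  have hdigit (k : ℕ) (hk : (powerSum π fun n => b (n + k)) = powerSum π fun n => c (n + k)) :
      b k = c k := by
    refine hΓ _ (hb k) _ (hc k) ?_
    rw [powerSum_add_eq hπ hb1, powerSum_add_eq hπ hc1] at hk
    have hsub : b k - c k = π * ((powerSum π fun n => c (n + (k + 1))) -
        powerSum π fun n => b (n + (k + 1))) := by linear_combination hk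
    rw [hsub, map_mul]
    refine mul_le_of_le_one_right' ((Valuation.map_sub _ _ _).trans (max_le ?_ ?_)) <;>
      exact valuation_powerSum_le_one hπ.le fun n => by simp only [hb1, hc1]
  have htail (k : ℕ) : (powerSum π fun n => b (n + k)) = powerSum π fun n => c (n + k) := by
    induction k with
    | zero => exact hbc
    | succ k ih =>
      have hk := hdigit k ih
      rw [powerSum_add_eq hπ hb1, powerSum_add_eq hπ hc1, hk] at ih
      exact mul_left_cancel₀ hπ0 (add_left_cancel ih)
  exact funext fun k => hdigit k (htail k)

end PowerSeries

section Periodicity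

/-- The sequence `b` is periodic from some index on; the `ℕ`-indexed form of
`UltimatelyPeriodic`. -/
def EventuallyPeriodic {β : Type*} (b : ℕ → β) : Prop :=
  ∃ N k : ℕ, 0 < k ∧ ∀ n, N ≤ n → b (n + k) = b n

theorem ultimatelyPeriodic_iff_eventuallyPeriodic {β : Type*} {m : ℤ} {a : ℤ → β} :
    UltimatelyPeriodic m a ↔ EventuallyPeriodic fun n : ℕ => a (m + n) := by
  constructor
  · rintro ⟨N, k, hN, hk, hper⟩
    refine ⟨(N - m).toNat, k.toNat, by lia, fun n hn => ?_⟩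
    have hshift : m + ((n + k.toNat : ℕ) : ℤ) = m + n + k := by lia
    simp only [hshift, hper (m + n) (by lia)]
  · rintro ⟨N, k, hk, hper⟩
    refine ⟨m + N, k, by lia, by lia, fun n hn => ?_⟩
    convert hper (n - m).toNat (by lia) using 2 <;> lia

variable {L Γ₀ : Type*} [Field L] [LinearOrderedCommGroupWithZero Γ₀] [MulArchimedean Γ₀]
  [Valued L Γ₀] [CompleteSpace L] {π : L} (hπ : Valued.v π < 1)
include hπ

theorem powerSum_mem_of_eventuallyPeriodic {K : Subfield L} (hπK : π ∈ K) {b : ℕ → L}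
    (hbK : ∀ n, b n ∈ K) (hb : ∀ n, Valued.v (b n) ≤ 1) (hper : EventuallyPeriodic b) :
    powerSum π b ∈ K := by
  obtain ⟨N, k, hk, hper⟩ := hper
  have hsum (c : ℕ → L) (hc : ∀ n, c n ∈ K) (M : ℕ) : ∑ n ∈ Finset.range M, c n * π ^ n ∈ K :=
    sum_mem fun n _ => mul_mem (hc n) (pow_mem hπK n)
  have htail : (powerSum π fun n => b (n + N)) =
      (∑ n ∈ Finset.range k, b (n + N) * π ^ n) / (1 - π ^ k) := by
    have hne : 1 - π ^ k ≠ 0 := sub_ne_zero.2 fun h =>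
      (pow_lt_one₀ zero_le hπ hk.ne').ne (by rw [← map_pow, ← h, map_one])
    have hshift : (fun n => b (n + k + N)) = fun n => b (n + N) :=
      funext fun n => by rw [add_right_comm, hper _ (Nat.le_add_left N n)]
    have hrec := powerSum_eq_sum_add hπ (fun n => hb (n + N)) k
    rw [hshift] at hrec
    rw [eq_div_iff hne]
    linear_combination hrec
  rw [powerSum_eq_sum_add hπ hb N, htail]
  exact add_mem (hsum b hbK N) (mul_mem (pow_mem hπK N)
    (div_mem (hsum _ (fun n => hbK _) k) (sub_mem (one_mem _) (pow_mem hπK k))))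

theorem eventuallyPeriodic_of_finite_range_powerSum (hπ0 : π ≠ 0) {Γ : Set L}
    (hΓ1 : ∀ γ ∈ Γ, Valued.v γ ≤ 1) (hΓ : IncongruentModulo Valued.v π Γ) {b : ℕ → L}
    (hb : ∀ n, b n ∈ Γ) (hfin : (Set.range fun k => powerSum π fun n => b (n + k)).Finite) :
    EventuallyPeriodic b := by
  obtain ⟨i, j, hij, htail⟩ := hfin.exists_lt_map_eq_of_forall_mem Set.mem_range_self
  have hshift : (fun n => b (n + i)) = fun n => b (n + j) :=
    powerSum_injOn hπ hπ0 hΓ1 hΓ (fun n => hb _) (fun n => hb _) htail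
  refine ⟨i, j - i, Nat.sub_pos_of_lt hij, fun n hn => ?_⟩
  have hdigit : b (n - i + i) = b (n - i + j) := congrFun hshift (n - i)
  rw [Nat.sub_add_cancel hn] at hdigit
  rw [hdigit]
  congr 1
  lia

end Periodicity

section Rationality

variable {L Γ₀ ι : Type*} [Field L] [LinearOrderedCommGroupWithZero Γ₀] [Fintype ι] {π : L}
  {α : ι → L}

theorem le_span_range_of_rank_le_card {k V : Type*} [Field k] [AddCommGroup V] [Module k V]
    {w : ι → V} (hw : LinearIndependent k w) {W : Submodule k V} (hwW : ∀ i, w i ∈ W)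
    (hW : Module.rank k W ≤ Fintype.card ι) : W ≤ Submodule.span k (Set.range w) := by
  have : Module.Finite k W :=
    Module.rank_lt_aleph0_iff.1 (hW.trans_lt Cardinal.natCast_lt_aleph0)
  have hle : Submodule.span k (Set.range w) ≤ W := Submodule.span_le.2 (Set.range_subset_iff.2 hwW)
  refine (Submodule.eq_of_le_of_finrank_le hle ?_).ge
  rw [finrank_span_eq_card hw]
  exact Module.finrank_le_of_rank_le hW

section

variable [Valued L Γ₀] {F : Type*} [Field F] [Algebra F L]

theorem SpansModulo.of_dense {S : Set L} (hS : Dense S) (hπ0 : π ≠ 0) (hπ : Valued.v π ≤ 1)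
    (hspan : SpansModulo Valued.v F π α S) : SpansModulo Valued.v F π α Set.univ := by
  intro x _ hx
  obtain ⟨y, hyS, hxy⟩ := exists_mem_valuation_sub_le hS hπ0 x
  have hy : Valued.v y ≤ 1 := by
    rw [← sub_sub_cancel x y]
    exact (Valuation.map_sub _ _ _).trans (max_le hx (hxy.trans hπ))
  obtain ⟨c, hc⟩ := hspan y hyS hy
  refine ⟨c, ?_⟩
  rw [← sub_add_sub_cancel x y]
  exact (Valuation.map_add _ _ _).trans (max_le hxy hc)

variable [MulArchimedean Γ₀] [CompleteSpace L] [(Valued.v (R := L)).IsTrivialOn F]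

theorem SpansModulo.span_eq_top (hspan : SpansModulo Valued.v F π α Set.univ) (hπ0 : π ≠ 0)
    (hπ : Valued.v π < 1) (hα : ∀ i, Valued.v (α i) ≤ 1) {E : Subfield L}
    (hE : IsClosed (E : Set L)) (hπE : π ∈ E) (hFE : ∀ c, algebraMap F L c ∈ E) :
    Submodule.span E (Set.range α) = ⊤ := by
  refine eq_top_iff.2 fun x _ => ?_
  obtain ⟨N, hN⟩ := exists_valuation_pow_mul_le_one hπ x
  obtain ⟨d, hd, hdx⟩ := exists_powerSum_eq hπ hπ0 (D := Set.range fun c : ι → F => ∑ i, c i • α i)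
    (by
      rintro _ ⟨c, rfl⟩
      exact Valuation.map_sum_le _ fun i _ => valuation_smul_le_one (c i) (hα i))
    (by simpa using fun y => hspan y trivial) hN
  choose c hc using hd
  have hsum : ∑ i, (powerSum π fun n => algebraMap F L (c n i)) * α i = π ^ N * x := by
    rw [← powerSum_sum_mul hπ fun n i => Valuation.IsTrivialOn.valuation_algebraMap_le_one _ _,
      ← hdx]
    congr with n
    simp only [← hc, Algebra.smul_def]
  have hmem : π ^ N * x ∈ Submodule.span E (Set.range α) := by
    rw [← hsum]
    exact sum_mem fun i _ => Submodule.smul_mem _ (⟨_, powerSum_mem hE hπE fun n => hFE _⟩ : E)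
      (Submodule.subset_span (Set.mem_range_self i))
  have hxN := Submodule.smul_mem _ (⟨π ^ N, pow_mem hπE N⟩ : E)⁻¹ hmem
  rwa [Subfield.smul_def, smul_eq_mul, Subfield.coe_inv,
    inv_mul_cancel_left₀ (pow_ne_zero N hπ0)] at hxN

theorem IndependentModulo.mul_powerSum_mem_polyLattice (hind : IndependentModulo Valued.v F π α)
    (hπ0 : π ≠ 0) (hπ : Valued.v π < 1) (hα : ∀ i, Valued.v (α i) ≤ 1) {q : L}
    (hq : Valued.v q ≤ 1) {b : ℕ → L} (hb : ∀ k, Valued.v (b k) ≤ 1) {n : ℕ}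
    (hqb : ∀ k, q * b k ∈ polyLattice F π α n) (hqx : q * powerSum π b ∈ polyLattice F π α n)
    (k : ℕ) : (q * powerSum π fun j => b (j + k)) ∈ polyLattice F π α n := by
  induction k with
  | zero => exact hqx
  | succ k ih =>
    have hdiff : ((q * powerSum π fun j => b (j + k)) - q * b k) =
        π * (q * powerSum π fun j => b (j + (k + 1))) := by
      rw [powerSum_add_eq hπ hb]
      ring
    have hmem := sub_mem ih (hqb k)
    rw [hdiff] at hmem
    have hval : Valued.v (q * powerSum π fun j => b (j + (k + 1))) ≤ 1 := by
      rw [map_mul]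
      exact mul_le_one' hq (valuation_powerSum_le_one hπ.le fun j => hb _)
    obtain ⟨z, hz, hzeq⟩ := hind.exists_mem_polyLattice_eq_mul hπ.le hα hmem <| by
      rw [map_mul]
      exact mul_le_of_le_one_right' hval
    rwa [mul_left_cancel₀ hπ0 hzeq]

theorem IndependentModulo.eventuallyPeriodic_of_powerSum_mem_span [Finite F]
    (hind : IndependentModulo Valued.v F π α) (hπ0 : π ≠ 0) (hπ : Valued.v π < 1)
    (hα : ∀ i, Valued.v (α i) ≤ 1) {Γ : Set L} (hΓfin : Γ.Finite)
    (hΓ1 : ∀ γ ∈ Γ, Valued.v γ ≤ 1) (hΓ : IncongruentModulo Valued.v π Γ)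
    (hΓspan : Γ ⊆ Submodule.span (Algebra.adjoin F {π}) (Set.range α))
    {b : ℕ → L} (hb : ∀ n, b n ∈ Γ)
    (hx : powerSum π b ∈ Submodule.span F⟮π⟯ (Set.range α)) : EventuallyPeriodic b := by
  obtain ⟨⟨q, hq⟩, hqx⟩ := multiple_mem_span_of_mem_localization_span
    (nonZeroDivisors (Algebra.adjoin F {π})) F⟮π⟯ _ _ hx
  have hq0 : (q : L) ≠ 0 := by simpa using nonZeroDivisors.ne_zero hq
  have hq1 : Valued.v (q : L) ≤ 1 := by
    obtain ⟨g, hg⟩ := Algebra.adjoin_mem_exists_aeval F π q.2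
    rw [← hg]
    exact valuation_aeval_le_one hπ.le g
  have hqΓ : ∀ᶠ n in atTop, ∀ γ ∈ Γ, (q : L) * γ ∈ polyLattice F π α n :=
    (eventually_all_finite hΓfin).2 fun γ hγ =>
      eventually_mem_polyLattice (Submodule.smul_mem _ q (hΓspan hγ))
  obtain ⟨n, hqΓn, hqxn⟩ := (hqΓ.and (eventually_mem_polyLattice hqx)).exists
  have htail (k : ℕ) := hind.mul_powerSum_mem_polyLattice hπ0 hπ hα hq1 (fun k => hΓ1 _ (hb k))
    (fun k => hqΓn _ (hb k)) hqxn k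
  refine eventuallyPeriodic_of_finite_range_powerSum hπ hπ0 hΓ1 hΓ hb ?_
  have hfin : (polyLattice F π α n : Set L).Finite := finite_polyLattice n
  exact (hfin.preimage (mul_right_injective₀ hq0).injOn).subset (Set.range_subset_iff.2 htail)

theorem SpansModulo.rank_le_card (hspan : SpansModulo Valued.v F π α Set.univ) (hπ0 : π ≠ 0)
    (hπ : Valued.v π < 1) (hα : ∀ i, Valued.v (α i) ≤ 1) {E : Subfield L}
    (hE : IsClosed (E : Set L)) (hπE : π ∈ E) (hFE : ∀ c, algebraMap F L c ∈ E) :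
    Module.rank E L ≤ Fintype.card ι := by
  rw [← rank_top, ← hspan.span_eq_top hπ0 hπ hα hE hπE hFE]
  refine (rank_span_le _).trans ?_
  simpa using Cardinal.mk_range_le_lift (f := α)

end

theorem IndependentModulo.subset_span_adjoin {v : Valuation L Γ₀} {F : Subfield L}
    [v.IsTrivialOn F] (hind : IndependentModulo v F π α)
    (hπ0 : π ≠ 0) (hπ : v π ≤ 1) (hα : ∀ i, v (α i) ≤ 1) {S : Set L}
    (hαS : ∀ i, α i ∈ S) (hdeg : degOver (Subfield.closure (F ∪ {π})) S ≤ Fintype.card ι) :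
    S ⊆ Submodule.span F⟮π⟯ (Set.range α) := by
  rw [← adjoin_toSubfield] at hdeg
  exact Submodule.subset_span.trans (le_span_range_of_rank_le_card
    (hind.linearIndependent_adjoin hπ hα hπ0) (fun i => Submodule.subset_span (hαS i)) hdeg)

end Rationality

section Expansions

variable {π : Kv} {Γ : Set Kv}

theorem IsCompleteSetOfReps.incongruentModulo (hΓ : IsCompleteSetOfReps π Γ) :
    IncongruentModulo Valued.v π Γ := fun γ hγ _ hδ hγδ =>
  (hΓ.2 γ (hΓ.1 γ hγ)).unique ⟨hγ, by simp⟩ ⟨hδ, hγδ⟩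

theorem IsExpansion.eq_zpow_mul_powerSum (hπ0 : π ≠ 0) {m : ℤ} {a : ℤ → Kv} {x : Kv}
    (hx : IsExpansion π Γ m a x) : x = π ^ m * powerSum π fun n => a (m + n) := by
  rw [powerSum, ← tsum_mul_left, ← hx.2.tsum_eq]
  refine tsum_congr fun n => ?_
  rw [zpow_add₀ hπ0, zpow_natCast, mul_left_comm]

theorem IsExpansion.mem_iff_powerSum_mem {K : Subfield Kv} (hπ0 : π ≠ 0) (hπK : π ∈ K) {m : ℤ}
    {a : ℤ → Kv} {x : Kv} (hx : IsExpansion π Γ m a x) :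
    x ∈ K ↔ (powerSum π fun n => a (m + n)) ∈ K := by
  rw [hx.eq_zpow_mul_powerSum hπ0]
  have hπm := zpow_mem hπK m
  refine ⟨fun hmem => ?_, mul_mem hπm⟩
  rw [← inv_mul_cancel_left₀ (zpow_ne_zero m hπ0) (powerSum π _)]
  exact mul_mem (inv_mem hπm) hmem

end Expansions

section ConstantCoefficients

variable {L Γ₀ ι : Type*} [Field L] [LinearOrderedCommGroupWithZero Γ₀] {v : Valuation L Γ₀}
  [Fintype ι] {p : ℕ} [Fact p.Prime] [CharP L p] {K : Subfield L} {π : L} {α : ι → L}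

theorem independentModulo_constantSubfield (h : ∀ c : ι → L, (∀ i, c i ∈ ConstantField p K) →
    v (∑ i, c i * α i) ≤ v π → ∀ i, c i = 0) :
    IndependentModulo v (constantSubfield p K) π α := fun c hc =>
  funext fun i => Subtype.ext (h (fun i => c i) (fun i => (c i).2) hc i)

theorem spansModulo_constantSubfield {S : Set L} (h : ∀ x ∈ S, v x ≤ 1 → ∃ c : ι → L,
    (∀ i, c i ∈ ConstantField p K) ∧ v (x - ∑ i, c i * α i) ≤ v π) :
    SpansModulo v (constantSubfield p K) π α S := fun x hxS hx =>
  let ⟨c, hcF, hc⟩ := h x hxS hx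
  ⟨fun i => ⟨c i, hcF i⟩, hc⟩

theorem sum_mul_mem_span_adjoin_constantSubfield {g : ι → L} (hg : ∀ i, g i ∈ PolyInPi p K π) :
    ∑ i, g i * α i ∈
      Submodule.span (Algebra.adjoin (constantSubfield p K) {π}) (Set.range α) :=
  Submodule.mem_span_range_iff_exists_fun _ |>.2
    ⟨fun i => ⟨g i, polyInPi_subset_adjoin p K π (hg i)⟩, rfl⟩

end ConstantCoefficients

theorem propertyA_of_polynomial_digits_general
    {Kv : Type*} [Field Kv] [Valued Kv ZM0] [CompleteSpace Kv]
    {K : Subfield Kv} (hK : Dense (K : Set Kv)) {F : Subfield Kv} [Finite F]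
    {π : Kv} (hπ0 : π ≠ 0) (hπ : Valued.v π < 1) (hπK : π ∈ K)
    {Γ : Set Kv} (hΓ : IsCompleteSetOfReps π Γ) (hΓK : Γ ⊆ K)
    (hdeg : degOver (Subfield.closure (F ∪ {π})) (K : Set Kv) ≤
      Module.rank (Subfield.closure (F ∪ {π} : Set Kv)).topologicalClosure Kv)
    {ι : Type*} [Fintype ι] {α : ι → Kv} (hαK : ∀ i, α i ∈ K) (hα : ∀ i, Valued.v (α i) ≤ 1)
    (hind : IndependentModulo Valued.v F π α) (hspan : SpansModulo Valued.v F π α K)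
    (hΓspan : Γ ⊆ Submodule.span (Algebra.adjoin F {π}) (Set.range α)) :
    HasPropertyA K π Γ := by
  intro x m a hx
  have ha (n : ℕ) : a (m + n) ∈ Γ := hx.1 _ (by lia)
  have hΓinc := hΓ.incongruentModulo
  have hΓfin : Γ.Finite := hΓinc.finite hΓ.1 fun γ hγ => hspan γ (hΓK hγ)
  have hFπ : (F ∪ {π} : Set Kv) ⊆ (Subfield.closure (F ∪ {π} : Set Kv)).topologicalClosure :=
    Subfield.subset_closure.trans (Subfield.le_topologicalClosure _)
  have hrank := (hspan.of_dense hK hπ0 hπ.le).rank_le_card hπ0 hπ hα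
    (Subfield.isClosed_topologicalClosure _) (hFπ (.inr rfl)) fun c => hFπ (.inl c.2)
  have hKspan : (K : Set Kv) ⊆ Submodule.span F⟮π⟯ (Set.range α) :=
    hind.subset_span_adjoin hπ0 hπ.le hα hαK (hdeg.trans hrank)
  rw [hx.mem_iff_powerSum_mem hπ0 hπK, ultimatelyPeriodic_iff_eventuallyPeriodic]
  exact ⟨fun hmem => hind.eventuallyPeriodic_of_powerSum_mem_span hπ0 hπ hα hΓfin hΓ.1 hΓinc
      hΓspan ha (hKspan hmem),
    powerSum_mem_of_eventuallyPeriodic hπ hπK (fun n => hΓK (ha n)) fun n => hΓ.1 _ (ha n)⟩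

/-- **Lemma 2.3.** Suppose `π ∈ A`, `Γ ⊆ A`, and `[K : 𝔽_q(π)] = [K_v : 𝔽_q((π))]`.
Let `α₁, …, α_{ef} ∈ A` have reductions modulo `πA` forming an `𝔽_q`-basis of
`A/πA`.  If `Γ ⊆ 𝔽_q[π] α₁ + ⋯ + 𝔽_q[π] α_{ef}`, then `(Γ, π)` has property A. -/
theorem propertyA_of_polynomial_digits
    {Kv : Type*} [Field Kv] [Valued Kv ZM0]
    (p : ℕ) [Fact p.Prime] (K : Subfield Kv)
    (hK : IsGlobalFunctionFieldCompletion p K)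
    (π : Kv) (hπ0 : π ≠ 0) (hπ : Valued.v π < 1) (hπK : π ∈ K)
    (Γ : Set Kv) (hΓ : IsCompleteSetOfReps π Γ) (hΓK : Γ ⊆ (K : Set Kv))
    (hdeg : degOver (FqPi p K π) (K : Set Kv) = Module.rank ↥(FqPiCompletion p K π) Kv)
    (s : ℕ) (α : Fin s → Kv)
    (hα : ∀ i, α i ∈ K ∧ Valued.v (α i) ≤ 1)
    (hindep : ∀ c : Fin s → Kv, (∀ i, c i ∈ ConstantField p K) →
      Valued.v (∑ i, c i * α i) ≤ Valued.v π → ∀ i, c i = 0)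
    (hgen : ∀ x : Kv, x ∈ K → Valued.v x ≤ 1 →
      ∃ c : Fin s → Kv, (∀ i, c i ∈ ConstantField p K) ∧
        Valued.v (x - ∑ i, c i * α i) ≤ Valued.v π)
    (hΓpoly : ∀ γ ∈ Γ, ∃ g : Fin s → Kv,
      (∀ i, g i ∈ PolyInPi p K π) ∧ γ = ∑ i, g i * α i) :
    HasPropertyA K π Γ := by
  have := hK.charP
  have := hK.complete
  obtain ⟨t, -, ht, htK⟩ := hK.globalFunctionField
  have := finite_constantSubfield p ht htK
  exact propertyA_of_polynomial_digits_general hK.dense (F := constantSubfield p K) hπ0 hπ hπK hΓ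
    hΓK hdeg.le (fun i => (hα i).1) (fun i => (hα i).2) (independentModulo_constantSubfield hindep)
    (spansModulo_constantSubfield hgen) fun γ hγ =>
      let ⟨_, hg, hγg⟩ := hΓpoly γ hγ
      hγg ▸ sum_mul_mem_span_adjoin_constantSubfield hg
end

section
/- If (Γ, π) has property B, then π and all elements of Γ are algebraic over K. -/
/-!
Common setup: `Kv` is a complete field equipped with a (normalized, `ℤ`-valued)
valuation `Valued.v : Kv → ℤₘ₀ = WithZero (Multiplicative ℤ)`, and `K` is a dense
subfield of `Kv` (so that `Kv` is the completion `K_v` of `K`).  The valuation is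
written multiplicatively: the additive valuation of `x` is `n` iff
`Valued.v x = ofAdd (-n)`; the valuation ring `A_v` is `{x | Valued.v x ≤ 1}` and
`π A_v = {x | Valued.v x ≤ Valued.v π}`.
-/

open scoped Multiplicative

variable {Kv : Type*} [Field Kv] [Valued Kv ZM0]

/-!
For a digit `γ ∈ Γ`, the constant digit sequence `γ, γ, …` is `p`-automatic, so property B makes
`∑_{n ≥ m} γ π ^ n = γ π ^ m / (1 - π)` algebraic over `K` for every `m`. If `γ ≠ 0`, the quotient
of the values at `m = 1` and `m = 0` is `π`; multiplying the value at `m = 0` by `1 - π` then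
gives `γ`. A nonzero digit exists because some digit represents `1`, and `π` is not a unit.
-/

open Filter Topology

section Nonarchimedean

-- The net of all finite partial sums is Cauchy, so it converges as soon as a subnet does.
theorem hasSum_of_tendsto_sum_range {G : Type*} [AddCommGroup G] [UniformSpace G]
    [IsUniformAddGroup G] [NonarchimedeanAddGroup G] {f : ℕ → G} {a : G}
    (hf : Tendsto f atTop (𝓝 0))
    (ha : Tendsto (fun n ↦ ∑ i ∈ Finset.range n, f i) atTop (𝓝 a)) : HasSum f a := by
  rw [← Nat.cofinite_eq_atTop] at hf
  exact tendsto_nhds_of_cauchySeq_of_subseq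
    (NonarchimedeanAddGroup.cauchySeq_sum_of_tendsto_cofinite_zero hf) tendsto_finset_range ha

theorem hasSum_geometric_of_isTopologicallyNilpotent {F : Type*} [DivisionRing F] [UniformSpace F]
    [IsUniformAddGroup F] [NonarchimedeanRing F] {x : F} (hx : IsTopologicallyNilpotent x)
    (hx1 : x ≠ 1) : HasSum (fun n : ℕ ↦ x ^ n) (1 - x)⁻¹ := by
  refine hasSum_of_tendsto_sum_range hx ?_
  have hlim : Tendsto (fun n : ℕ ↦ (x ^ n - 1) / (x - 1)) atTop (𝓝 ((0 - 1) / (x - 1))) :=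
    (hx.sub_const 1).div_const (x - 1)
  simpa only [geom_sum_eq hx1, zero_sub, neg_div, one_div, ← inv_neg, neg_sub] using hlim

instance valued_nonarchimedeanRing {R Γ₀ : Type*} [Ring R] [LinearOrderedCommGroupWithZero Γ₀]
    [Valued R Γ₀] : NonarchimedeanRing R :=
  (Valued.toUniformSpace_eq R Γ₀).symm ▸ Valued.v.subgroups_basis.nonarchimedean

theorem ne_one_of_valuation_lt_one {R Γ₀ : Type*} [Ring R] [LinearOrderedCommGroupWithZero Γ₀]
    {v : Valuation R Γ₀} {x : R} (hx : v x < 1) : x ≠ 1 := by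
  rintro rfl
  exact hx.ne v.map_one

theorem hasSum_geometric_of_valuation_lt_one {F Γ₀ : Type*} [DivisionRing F]
    [LinearOrderedCommGroupWithZero Γ₀] [MulArchimedean Γ₀] [Valued F Γ₀] {x : F}
    (hx : Valued.v x < 1) : HasSum (fun n : ℕ ↦ x ^ n) (1 - x)⁻¹ :=
  hasSum_geometric_of_isTopologicallyNilpotent (Valued.tendsto_zero_pow_of_v_lt_one hx)
    (ne_one_of_valuation_lt_one hx)

end Nonarchimedean

theorem isKAutomatic_const {α : Type*} (k : ℕ) (c : α) : IsKAutomatic k fun _ ↦ c := by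
  refine (Set.finite_singleton fun _ : ℕ ↦ c).subset ?_
  rintro _ ⟨i, j, -, rfl⟩
  rfl

theorem isExpansion_const {π γ : Kv} {Γ : Set Kv} (hπ : Valued.v π < 1) (hγ : γ ∈ Γ) (m : ℕ) :
    IsExpansion π Γ m (fun _ ↦ γ) (γ * π ^ m * (1 - π)⁻¹) := by
  refine ⟨fun _ _ ↦ hγ, ((hasSum_geometric_of_valuation_lt_one hπ).mul_left _).congr_fun fun n ↦ ?_⟩
  rw [← Nat.cast_add, zpow_natCast, pow_add, mul_assoc]

theorem IsCompleteSetOfReps.exists_ne_zero {π : Kv} {Γ : Set Kv} (hΓ : IsCompleteSetOfReps π Γ)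
    (hπ : Valued.v π < 1) : ∃ γ ∈ Γ, γ ≠ 0 := by
  obtain ⟨γ, ⟨hγ, hγ_one⟩, -⟩ := hΓ.2 1 (map_one _).le
  refine ⟨γ, hγ, ?_⟩
  rintro rfl
  rw [sub_zero, map_one] at hγ_one
  exact hγ_one.not_gt hπ

namespace HasPropertyB

variable {p : ℕ} {K : Subfield Kv} {π γ : Kv} {Γ : Set Kv}

theorem isAlgebraic_geometric (hB : HasPropertyB p K π Γ) (hπ : Valued.v π < 1) (hγ : γ ∈ Γ)
    (m : ℕ) : IsAlgebraic K (γ * π ^ m * (1 - π)⁻¹) :=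
  (hB _ _ _ (isExpansion_const hπ hγ m)).2 (isKAutomatic_const p γ)

theorem isAlgebraic_base (hB : HasPropertyB p K π Γ) (hπ : Valued.v π < 1) (hγ : γ ∈ Γ)
    (hγ0 : γ ≠ 0) : IsAlgebraic K π := by
  have hsub : 1 - π ≠ 0 := sub_ne_zero.2 (ne_one_of_valuation_lt_one hπ).symm
  have hquot : γ * π ^ 1 * (1 - π)⁻¹ * (γ * π ^ 0 * (1 - π)⁻¹)⁻¹ = π := by
    field_simp
  exact hquot ▸ (hB.isAlgebraic_geometric hπ hγ 1).mul (hB.isAlgebraic_geometric hπ hγ 0).inv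

theorem isAlgebraic_digit (hB : HasPropertyB p K π Γ) (hπ : Valued.v π < 1) (hγ : γ ∈ Γ) :
    IsAlgebraic K γ := by
  rcases eq_or_ne γ 0 with rfl | hγ0
  · exact isAlgebraic_zero
  have hsub : 1 - π ≠ 0 := sub_ne_zero.2 (ne_one_of_valuation_lt_one hπ).symm
  have hprod : γ * π ^ 0 * (1 - π)⁻¹ * (1 - π) = γ := by
    field_simp
  exact hprod ▸ (hB.isAlgebraic_geometric hπ hγ 0).mul
    (isAlgebraic_one.sub (hB.isAlgebraic_base hπ hγ hγ0))

end HasPropertyB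

theorem algebraic_of_propertyB_general (p : ℕ) (K : Subfield Kv) (π : Kv) (hπ : Valued.v π < 1)
    (Γ : Set Kv) (hΓ : ∃ γ ∈ Γ, γ ≠ 0) (hB : HasPropertyB p K π Γ) :
    IsAlgebraic K π ∧ ∀ γ ∈ Γ, IsAlgebraic K γ := by
  obtain ⟨γ₀, hγ₀, hγ₀_ne⟩ := hΓ
  exact ⟨hB.isAlgebraic_base hπ hγ₀ hγ₀_ne, fun γ hγ ↦ hB.isAlgebraic_digit hπ hγ⟩

/-- **Lemma 3.1.** If `(Γ, π)` has property B, then `π` and all elements of `Γ`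
are algebraic over `K`. -/
theorem algebraic_of_propertyB
    {Kv : Type*} [Field Kv] [Valued Kv ZM0]
    (p : ℕ) [Fact p.Prime] (K : Subfield Kv)
    (hK : IsGlobalFunctionFieldCompletion p K)
    (π : Kv) (hπ0 : π ≠ 0) (hπ : Valued.v π < 1)
    (Γ : Set Kv) (hΓ : IsCompleteSetOfReps π Γ)
    (hB : HasPropertyB p K π Γ) :
    IsAlgebraic ↥K π ∧ ∀ γ ∈ Γ, IsAlgebraic ↥K γ :=
  algebraic_of_propertyB_general p K π hπ Γ (hΓ.exists_ne_zero hπ) hB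
end
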